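/- Let a > 0 be a real number. Define functions G_0, G_1, G_2, … on the interval (−∞, 1/a) by G_0(x) = 1/(1 − ax) and G_{j+1}(x) = ∫_0^x G_j(u) du. Then for every integer p ≥ 1 and every real x with x < 1/a, G_p(x) = ((-1)^p / (a^p (p−1)!)) · [ (1 − ax)^{p−1} ln(1 − ax) − H_{p−1}(1 − ax)^{p−1} + H_{p−1} ] + Σ_{k=1}^{p−2} (-1)^{p−k} H_{p−1−k} x^k / ( a^{p−k} (p−1−k)! k! ), where the last sum is empty for p ≤ 2. -/

import Mathlib

/-- Harmonic numbers. -/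
def harmonic' (n : ℕ) : ℚ := ∑ j ∈ Finset.Icc 1 n, (1 : ℚ) / (j : ℚ)


/-- Coefficients of the polynomial part. -/
noncomputable def auxC (a : ℝ) (m : ℕ) : ℝ :=
  (-1 : ℝ) ^ (m + 1) * (harmonic' m : ℝ) / (a ^ (m + 1) * (Nat.factorial m : ℝ))

/-- Closed form of `G (n + 1)`. -/
noncomputable def auxF (a : ℝ) (n : ℕ) (x : ℝ) : ℝ :=
  ((-1 : ℝ) ^ (n + 1) / (a ^ (n + 1) * (Nat.factorial n : ℝ))) *
    ((1 - a * x) ^ n * Real.log (1 - a * x) - (harmonic' n : ℝ) * (1 - a * x) ^ n) +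
  ∑ k ∈ Finset.range (n + 1), auxC a (n - k) * (x ^ k / (Nat.factorial k : ℝ))

lemma harm_zero : harmonic' 0 = 0 := by simp [harmonic']

lemma harm_succ (n : ℕ) : (harmonic' (n + 1) : ℝ) = harmonic' n + 1 / ((n : ℝ) + 1) := by
  unfold harmonic'
  rw [Finset.sum_Icc_succ_top (by omega)]
  push_cast
  rfl

lemma auxF_zero (a : ℝ) (n : ℕ) : auxF a n 0 = 0 := by
  unfold auxF
  rw [Finset.sum_range_succ']
  simp [auxC]
  ring

lemma pos_of_lt {a x : ℝ} (ha : 0 < a) (hx : x < 1 / a) : 0 < 1 - a * x := by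
  rw [lt_div_iff₀ ha] at hx
  linarith

lemma hasDeriv_lin (a x : ℝ) : HasDerivAt (fun x : ℝ => 1 - a * x) (-a) x := by
  simpa using ((hasDerivAt_id x).const_mul a).const_sub 1

lemma auxF_deriv_zero {a : ℝ} (ha : 0 < a) {x : ℝ} (hx : x < 1 / a) :
    HasDerivAt (auxF a 0) (1 / (1 - a * x)) x := by
  have hy := pos_of_lt ha hx
  have h := ((hasDeriv_lin a x).log hy.ne').const_mul (-1 / a)
  have e : auxF a 0 = fun x => -1 / a * Real.log (1 - a * x) := by
    funext x
    simp [auxF, auxC, harm_zero]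
  rw [e]
  refine h.congr_deriv ?_
  have hy' := hy.ne'
  field_simp

lemma auxF_deriv_succ {a : ℝ} (ha : 0 < a) (n : ℕ) {x : ℝ} (hx : x < 1 / a) :
    HasDerivAt (auxF a (n + 1)) (auxF a n x) x := by
  have hy := pos_of_lt ha hx
  have hl := (hasDeriv_lin a x).log hy.ne'
  have hp := (hasDeriv_lin a x).fun_pow (n + 1)
  have h1 := ((hp.fun_mul hl).fun_sub (hp.const_mul (harmonic' (n + 1) : ℝ))).const_mul
    ((-1 : ℝ) ^ (n + 1 + 1) / (a ^ (n + 1 + 1) * (Nat.factorial (n + 1) : ℝ)))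
  have h2 : HasDerivAt (fun x : ℝ => ∑ k ∈ Finset.range (n + 1 + 1),
      auxC a (n + 1 - k) * (x ^ k / (Nat.factorial k : ℝ)))
      (∑ k ∈ Finset.range (n + 1), auxC a (n - k) * (x ^ k / (Nat.factorial k : ℝ))) x := by
    have h3 := HasDerivAt.fun_sum (u := Finset.range (n + 1 + 1))
      (fun k _ => (((hasDerivAt_pow k x).div_const (Nat.factorial k : ℝ)).const_mul
        (auxC a (n + 1 - k))))
    refine h3.congr_deriv ?_
    rw [Finset.sum_range_succ' _ (n + 1)]
    simp only [Nat.cast_zero, zero_mul, zero_div, mul_zero, add_zero]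
    refine Finset.sum_congr rfl fun k _ => ?_
    rw [Nat.add_sub_add_right, Nat.factorial_succ]
    have : (Nat.factorial k : ℝ) ≠ 0 := by positivity
    push_cast
    field_simp
  refine (h1.fun_add h2).congr_deriv ?_
  unfold auxF
  congr 1
  rw [harm_succ, Nat.factorial_succ]
  have : (Nat.factorial n : ℝ) ≠ 0 := by positivity
  have h0 : (n : ℝ) + 1 ≠ 0 := by positivity
  have hy' := hy.ne'
  push_cast
  generalize 1 - a * x = y at *
  field_simp
  ring

lemma integral_aux {a : ℝ} (ha : 0 < a) {F f g : ℝ → ℝ}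
    (hF : ∀ x, x < 1 / a → HasDerivAt F (f x) x)
    (hf : ∀ x, x < 1 / a → ContinuousAt f x) (h0 : F 0 = 0)
    (hg : ∀ x, x < 1 / a → g x = f x) {x : ℝ} (hx : x < 1 / a) :
    ∫ u in (0 : ℝ)..x, g u = F x := by
  have hm : ∀ u ∈ Set.uIcc 0 x, u < 1 / a := by
    intro u hu
    rw [Set.mem_uIcc] at hu
    have : 0 < 1 / a := by positivity
    rcases hu with hu | hu <;> linarith
  rw [intervalIntegral.integral_congr (g := f) (fun u hu => hg u (hm u hu)),
    intervalIntegral.integral_eq_sub_of_hasDerivAt (fun u hu => hF u (hm u hu)), h0, sub_zero]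
  exact ContinuousOn.intervalIntegrable fun u hu => (hf u (hm u hu)).continuousWithinAt

theorem iterated_integral_geom_series (a : ℝ) (ha : 0 < a) (G : ℕ → ℝ → ℝ)
    (hG0 : ∀ x : ℝ, x < 1 / a → G 0 x = 1 / (1 - a * x))
    (hGsucc : ∀ j : ℕ, ∀ x : ℝ, x < 1 / a → G (j + 1) x = ∫ u in (0 : ℝ)..x, G j u)
    (p : ℕ) (hp : 1 ≤ p) (x : ℝ) (hx : x < 1 / a) :
    G p x =
      ((-1 : ℝ) ^ p / (a ^ p * (Nat.factorial (p - 1) : ℝ))) *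
          ((1 - a * x) ^ (p - 1) * Real.log (1 - a * x) -
            (harmonic' (p - 1) : ℝ) * (1 - a * x) ^ (p - 1) + (harmonic' (p - 1) : ℝ)) +
        ∑ k ∈ Finset.Icc 1 (p - 2),
          (-1 : ℝ) ^ (p - k) * (harmonic' (p - 1 - k) : ℝ) * x ^ k /
            (a ^ (p - k) * (Nat.factorial (p - 1 - k) : ℝ) * (Nat.factorial k : ℝ)) := by
  have key : ∀ n : ℕ, ∀ x : ℝ, x < 1 / a → G (n + 1) x = auxF a n x := by
    intro n
    induction n with
    | zero =>
      intro x hx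
      rw [hGsucc 0 x hx]
      refine integral_aux ha (f := fun x => 1 / (1 - a * x))
        (fun x hx => auxF_deriv_zero ha hx) (fun x hx => ?_) (auxF_zero a 0) hG0 hx
      have := (pos_of_lt ha hx).ne'
      fun_prop (disch := assumption)
    | succ n ih =>
      intro x hx
      rw [hGsucc (n + 1) x hx]
      refine integral_aux ha (f := auxF a n)
        (fun x hx => auxF_deriv_succ ha n hx) (fun x hx => ?_) (auxF_zero a _) ih hx
      cases n with
      | zero => exact (auxF_deriv_zero ha hx).continuousAt
      | succ n => exact (auxF_deriv_succ ha n hx).continuousAt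
  obtain ⟨n, rfl⟩ : ∃ n, p = n + 1 := ⟨p - 1, by omega⟩
  rw [key n x hx]
  unfold auxF
  simp only [Nat.add_sub_cancel]
  cases n with
  | zero => simp [auxC, harm_zero]
  | succ m =>
    have e : m + 1 + 1 - 2 = m := by omega
    rw [e, Finset.sum_range_succ, Finset.sum_range_succ']
    have hs : ∑ k ∈ Finset.range m, auxC a (m + 1 - (k + 1)) *
        (x ^ (k + 1) / (Nat.factorial (k + 1) : ℝ)) =
        ∑ k ∈ Finset.Icc 1 m,
          (-1 : ℝ) ^ (m + 1 + 1 - k) * (harmonic' (m + 1 - k) : ℝ) * x ^ k /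
            (a ^ (m + 1 + 1 - k) * (Nat.factorial (m + 1 - k) : ℝ) * (Nat.factorial k : ℝ)) := by
      rw [← Finset.Ico_add_one_right_eq_Icc, Finset.sum_Ico_eq_sum_range]
      refine Finset.sum_congr rfl fun k hk => ?_
      rw [Finset.mem_range] at hk
      rw [add_comm 1 k]
      have e2 : m + 1 + 1 - (k + 1) = m + 1 - (k + 1) + 1 := by omega
      rw [e2]
      unfold auxC
      rw [div_mul_div_comm]
    rw [hs]
    simp only [auxC, Nat.sub_self, harm_zero, Nat.sub_zero]
    simp
    ring
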